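/- arXiv:2601.13906 — 2 statements merged into one kernel-verified Lean document; each statement's English description precedes it below -/
import Mathlib

section
/- Let 𝒫 be a set of r-patterns such that for every k ≥ 1, any two distinct 𝒫-cliques of size k whose edges partition [rk] have distinct traces. Then there exists a constant C > 0 such that the probability that z_𝒫(RM_n^(r)) ≤ C·n^(1/r) tends to 1 as n → ∞. -/
open Finset
open scoped Classical

/-- An ordered `r`-matching of size `n`: a partition of `[r*n] = {1,…,r*n}` into `n`
pairwise disjoint `r`-element subsets (the edges). -/
def IsOrderedMatching (r n : ℕ) (M : Finset (Finset ℕ)) : Prop :=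
  M.card = n ∧ (∀ e ∈ M, e.card = r) ∧
  (∀ e ∈ M, ∀ f ∈ M, e ≠ f → Disjoint e f) ∧
  M.biUnion id = Finset.Icc 1 (r * n)

/-- Two disjoint `r`-element sets `e`, `f` form the `r`-pattern `P`: the unique
order-preserving bijection from `e ∪ f` onto `[2r]` maps the pair `{e, f}` onto `P`. -/
def FormsPattern (r : ℕ) (e f : Finset ℕ) (P : Finset (Finset ℕ)) : Prop :=
  ∃ φ : ℕ → ℕ, StrictMonoOn φ ↑(e ∪ f) ∧
    (e ∪ f).image φ = Finset.Icc 1 (2 * r) ∧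
    ({e.image φ, f.image φ} : Finset (Finset ℕ)) = P

/-- A `Ps`-clique: a family of pairwise disjoint `r`-element subsets of `ℕ`, every two of
which form a pattern belonging to `Ps`. -/
def IsClique (r : ℕ) (Ps : Set (Finset (Finset ℕ))) (K : Finset (Finset ℕ)) : Prop :=
  (∀ e ∈ K, e.card = r) ∧ (∀ e ∈ K, ∀ f ∈ K, e ≠ f → Disjoint e f) ∧
  (∀ e ∈ K, ∀ f ∈ K, e ≠ f → ∃ P ∈ Ps, FormsPattern r e f P)

/-- `z_Ps(M)`: the maximum size of a subfamily of `M` that is a `Ps`-clique. -/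
noncomputable def zClique (r : ℕ) (Ps : Set (Finset (Finset ℕ))) (M : Finset (Finset ℕ)) : ℕ :=
  sSup {k | ∃ K : Finset (Finset ℕ), K ⊆ M ∧ IsClique r Ps K ∧ K.card = k}

/-- All ordered `r`-matchings of size `n` (as a finset). -/
noncomputable def matchingFamilies (r n : ℕ) : Finset (Finset (Finset ℕ)) :=
  ((Finset.Icc 1 (r * n)).powerset.powerset).filter (IsOrderedMatching r n)

/-- The probability of the event `A` for a uniformly random ordered `r`-matching of size `n`. -/
noncomputable def prob (r n : ℕ) (A : Finset (Finset ℕ) → Prop) : ℝ :=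
  (((matchingFamilies r n).filter A).card : ℝ) / ((matchingFamilies r n).card : ℝ)

/-- Expectation of `X` with respect to a uniformly random ordered `r`-matching of size `n`. -/
noncomputable def expect (r n : ℕ) (X : Finset (Finset ℕ) → ℝ) : ℝ :=
  (∑ M ∈ matchingFamilies r n, X M) / ((matchingFamilies r n).card : ℝ)

/-- An `r`-partite `r`-pattern: each edge contains exactly one of `{2i-1, 2i}` for each
`i = 1, …, r`. -/
def IsPartitePattern (r : ℕ) (P : Finset (Finset ℕ)) : Prop :=
  IsOrderedMatching r 2 P ∧
  ∀ e ∈ P, ∀ i ∈ Finset.Icc 1 r, (e ∩ {2 * i - 1, 2 * i}).card = 1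

/-- An `r`-pattern `P` is collectable if there exist arbitrarily large `{P}`-cliques. -/
def Collectable (r : ℕ) (P : Finset (Finset ℕ)) : Prop :=
  ∀ k : ℕ, ∃ K : Finset (Finset ℕ), IsClique r {P} K ∧ K.card = k

/-- The word of a pattern `P` over `{A=true, B=false}`: the `j`-th letter is `true` iff
vertex `j` lies in the edge of `P` containing `1`. -/
noncomputable def patternWord (r : ℕ) (P : Finset (Finset ℕ)) : List Bool :=
  (List.range (2 * r)).map (fun j => decide (∃ e ∈ P, 1 ∈ e ∧ j + 1 ∈ e))

/-- `lam` is a splitting of the word `w` into consecutive blocks of the form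
`A^t B^t` or `B^t A^t` with half-lengths given by `lam`. -/
def IsBlockSplitting (w : List Bool) (lam : List ℕ) : Prop :=
  (∀ t ∈ lam, 1 ≤ t) ∧
  ∃ bs : List Bool, bs.length = lam.length ∧
    w = (List.zipWith (fun t b => List.replicate t b ++ List.replicate t !b) lam bs).flatten

/-- The pattern `P` has composition `lam` (the sequence of half-lengths of the blocks of
its unique splitting). -/
def HasComposition (r : ℕ) (P : Finset (Finset ℕ)) (lam : List ℕ) : Prop :=
  IsBlockSplitting (patternWord r P) lam

/-- Two distinct collectable `r`-patterns are harmonious if they have the same composition. -/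
def Harmonious (r : ℕ) (P Q : Finset (Finset ℕ)) : Prop :=
  P ≠ Q ∧ Collectable r P ∧ Collectable r Q ∧
  ∃ lam : List ℕ, HasComposition r P lam ∧ HasComposition r Q lam

/-- A pair of distinct `r`-patterns is a mismatch if exactly one of them is collectable, or
both are collectable but their compositions differ. -/
def Mismatch (r : ℕ) (P Q : Finset (Finset ℕ)) : Prop :=
  P ≠ Q ∧
  ((Collectable r P ∧ ¬ Collectable r Q) ∨
   (¬ Collectable r P ∧ Collectable r Q) ∨
   (Collectable r P ∧ Collectable r Q ∧
     ¬ ∃ lam : List ℕ, HasComposition r P lam ∧ HasComposition r Q lam))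

/-- The trace of an ordered `r`-matching of size `k` on `[rk]`: the `j`-th letter equals
`i` when `j` is the `i`-th smallest element of the edge containing `j`. -/
noncomputable def trace (r k : ℕ) (M : Finset (Finset ℕ)) : List ℕ :=
  (List.range (r * k)).map (fun j₀ =>
    ((Finset.Icc 1 (r * k)).filter
      (fun x => x ≤ j₀ + 1 ∧ ∃ e ∈ M, j₀ + 1 ∈ e ∧ x ∈ e)).card)

/-- `a_Ps(k)`: the number of `Ps`-cliques of size `k` whose edges partition `[rk]`. -/
noncomputable def cliqueCount (r : ℕ) (Ps : Set (Finset (Finset ℕ))) (k : ℕ) : ℕ :=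
  (((Finset.Icc 1 (r * k)).powerset.powerset).filter
    (fun M => IsOrderedMatching r k M ∧ IsClique r Ps M)).card

/-- The maximum size of any `Ps`-clique whatsoever. -/
noncomputable def maxCliqueSize (r : ℕ) (Ps : Set (Finset (Finset ℕ))) : ℕ :=
  sSup {k | ∃ K : Finset (Finset ℕ), IsClique r Ps K ∧ K.card = k}

/-- `M` contains a copy of the ordered `r`-matching `H` of size `k`: a subfamily `N ⊆ M` of
`k` edges such that the order-preserving bijection from the union of the edges of `N`
onto `[rk]` maps `N` onto `H`. -/
def ContainsCopy (r k : ℕ) (H M : Finset (Finset ℕ)) : Prop :=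
  ∃ N ⊆ M, N.card = k ∧ ∃ φ : ℕ → ℕ,
    StrictMonoOn φ ↑(N.biUnion id) ∧
    (N.biUnion id).image φ = Finset.Icc 1 (r * k) ∧
    N.image (fun e => e.image φ) = H

/-- Delete the `j`-th smallest element of the finite set `e`. -/
def deleteJth (j : ℕ) (e : Finset ℕ) : Finset ℕ :=
  e.filter (fun x => (e.filter (· ≤ x)).card ≠ j)

/-- Relabel the elements of `e` order-preservingly by their ranks in `V`. -/
def relabel (V : Finset ℕ) (e : Finset ℕ) : Finset ℕ :=
  e.image (fun x => (V.filter (· ≤ x)).card)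

/-- `S^(−j)`: delete from each edge of the pattern `S` its `j`-th smallest element and
relabel the remaining vertices order-preservingly. -/
def patternDelete (j : ℕ) (S : Finset (Finset ℕ)) : Finset (Finset ℕ) :=
  (S.image (deleteJth j)).image (relabel ((S.image (deleteJth j)).biUnion id))

/-!
The proof is a first moment computation. Let `a k` be the number of cliques of size `k` on `[rk]`.
Relabelling a clique order-preservingly keeps it a clique, so there are at most
`(rn).choose (rk) * a k` cliques of size `k` with vertices in `[rn]`, and each of them is contained
in as many matchings as there are matchings of the remaining `r(n - k)` vertices. The number of
matchings of size `n` being `(rn)! / (r! ^ n * n!)`, this gives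
`P(z ≥ k) ≤ a k * (r! * n) ^ k / (rk)!`. If `a k ≤ B ^ k`, then `(rk)! ≥ (rk / e) ^ (rk)` makes
the right-hand side at most `2 ^ (-k)` once `k ≥ C * n ^ (1 / r)` for a large constant `C`.
Reconstructibility embeds the cliques of size `k` on `[rk]` into the words of length `rk` over `r`
letters, so it provides such a bound with `B = r ^ r`.
-/

section Matchings

variable {α β : Type*} [DecidableEq α] [DecidableEq β] {r n : ℕ} {V : Finset α}
  {M K : Finset (Finset α)}

/-- The perfect `r`-uniform matchings of a vertex set `V`. Ordered `r`-matchings are the case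
`V = [rn]`; arbitrary `V` is what remains after some edges have been removed. The number of
edges is not recorded, as `V` determines it when `r` is positive. -/
noncomputable def matchingsOn (r : ℕ) (V : Finset α) : Finset (Finset (Finset α)) :=
  V.powerset.powerset.filter fun M ↦
    (∀ e ∈ M, #e = r) ∧ (M : Set (Finset α)).PairwiseDisjoint id ∧ M.biUnion id = V

theorem mem_matchingsOn : M ∈ matchingsOn r V ↔
    (∀ e ∈ M, #e = r) ∧ (M : Set (Finset α)).PairwiseDisjoint id ∧ M.biUnion id = V := by
  refine mem_filter.trans (and_iff_right_of_imp fun h ↦ ?_)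
  exact mem_powerset.2 fun e he ↦ mem_powerset.2 (h.2.2 ▸ subset_biUnion_of_mem id he)

theorem subset_of_mem_matchingsOn (hM : M ∈ matchingsOn r V) {e : Finset α} (he : e ∈ M) :
    e ⊆ V :=
  (mem_matchingsOn.1 hM).2.2 ▸ subset_biUnion_of_mem id he

theorem singleton_mem_matchingsOn {e : Finset α} (he : #e = r) : {e} ∈ matchingsOn r e :=
  mem_matchingsOn.2 ⟨by simpa using he, by simp, by simp⟩

theorem card_eq_mul_card_of_mem_matchingsOn (hM : M ∈ matchingsOn r V) : #V = r * #M := by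
  obtain ⟨hcard, hdisj, rfl⟩ := mem_matchingsOn.1 hM
  rw [card_biUnion hdisj, mul_comm]
  exact sum_const_nat hcard

theorem card_eq_of_mem_matchingsOn (hr : 0 < r) (hV : #V = r * n) (hM : M ∈ matchingsOn r V) :
    #M = n :=
  Nat.eq_of_mul_eq_mul_left hr <| (card_eq_mul_card_of_mem_matchingsOn hM).symm.trans hV

theorem image_mem_matchingsOn {φ : α → β} (hφ : Set.InjOn φ V) (hM : M ∈ matchingsOn r V) :
    M.image (image φ) ∈ matchingsOn r (V.image φ) := by
  have hsub {e} (he : e ∈ M) : (e : Set α) ⊆ V := coe_subset.2 (subset_of_mem_matchingsOn hM he)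
  obtain ⟨hcard, hdisj, hcover⟩ := mem_matchingsOn.1 hM
  refine mem_matchingsOn.2 ⟨forall_mem_image.2 fun e he ↦ ?_, ?_, ?_⟩
  · rw [card_image_of_injOn (hφ.mono (hsub he)), hcard e he]
  · rw [coe_image]
    rintro _ ⟨e, he, rfl⟩ _ ⟨f, hf, rfl⟩ hne
    have hef : Disjoint e f := hdisj he hf (ne_of_apply_ne _ hne)
    simpa only [Function.onFun, id, ← disjoint_coe, coe_image] using
      (disjoint_coe.2 hef).image hφ (hsub he) (hsub hf)
  · simp only [← hcover, image_biUnion, biUnion_image, id]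

theorem sdiff_mem_matchingsOn (hM : M ∈ matchingsOn r V) (hKM : K ⊆ M) :
    M \ K ∈ matchingsOn r (V \ K.biUnion id) := by
  obtain ⟨hcard, hdisj, rfl⟩ := mem_matchingsOn.1 hM
  refine mem_matchingsOn.2 ⟨fun e he ↦ hcard e (mem_sdiff.1 he).1,
    hdisj.subset (coe_subset.2 sdiff_subset), ?_⟩
  have hrest : Disjoint ((M \ K).biUnion id) (K.biUnion id) := by
    simp only [disjoint_biUnion_left, disjoint_biUnion_right, mem_sdiff]
    rintro f hf e ⟨heM, heK⟩
    exact hdisj heM (hKM hf) fun hef ↦ heK (hef ▸ hf)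
  rw [← hrest.sdiff_eq_left, ← union_sdiff_right, ← union_biUnion, sdiff_union_of_subset hKM]

theorem union_mem_matchingsOn {U : Finset α} (hM : M ∈ matchingsOn r V)
    (hK : K ∈ matchingsOn r U) (hVU : Disjoint V U) : M ∪ K ∈ matchingsOn r (V ∪ U) := by
  obtain ⟨hMcard, hMdisj, rfl⟩ := mem_matchingsOn.1 hM
  obtain ⟨hKcard, hKdisj, rfl⟩ := mem_matchingsOn.1 hK
  refine mem_matchingsOn.2 ⟨?_, ?_, union_biUnion⟩
  · simpa only [mem_union, or_imp, forall_and] using ⟨hMcard, hKcard⟩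
  · rw [coe_union, Set.pairwiseDisjoint_union]
    refine ⟨hMdisj, hKdisj, fun e he f hf _ ↦ ?_⟩
    exact hVU.mono (subset_biUnion_of_mem id he) (subset_biUnion_of_mem id hf)

theorem disjoint_of_mem_matchingsOn (hr : 0 < r) {U : Finset α} (hM : M ∈ matchingsOn r V)
    (hK : K ∈ matchingsOn r U) (hVU : Disjoint V U) : Disjoint M K := by
  refine disjoint_left.2 fun e heM heK ↦ hr.ne ?_
  have hempty : e = ∅ := disjoint_self.1 <|
    hVU.mono (subset_of_mem_matchingsOn hM heM) (subset_of_mem_matchingsOn hK heK)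
  rw [← (mem_matchingsOn.1 hM).1 e heM, hempty, card_empty]

theorem card_filter_superset_matchingsOn (hr : 0 < r) {U : Finset α}
    (hK : K ∈ matchingsOn r U) (hUV : U ⊆ V) :
    #{M ∈ matchingsOn r V | K ⊆ M} = #(matchingsOn r (V \ U)) := by
  have hdisj {N} (hN : N ∈ matchingsOn r (V \ U)) : Disjoint N K :=
    disjoint_of_mem_matchingsOn hr hN hK sdiff_disjoint
  refine card_nbij' (· \ K) (· ∪ K) (fun M hM ↦ ?_) (fun N hN ↦ ?_) (fun M hM ↦ ?_)
    (fun N hN ↦ union_sdiff_cancel_right (hdisj hN))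
  · obtain ⟨hM, hKM⟩ := mem_filter.1 hM
    exact (mem_matchingsOn.1 hK).2.2 ▸ sdiff_mem_matchingsOn hM hKM
  · refine mem_filter.2 ⟨?_, subset_union_right⟩
    simpa only [sdiff_union_of_subset hUV] using union_mem_matchingsOn hN hK sdiff_disjoint
  · exact sdiff_union_of_subset (mem_filter.1 hM).2

theorem uniformBell_succ_mul_succ (n : ℕ) (hr : 0 < r) :
    Nat.uniformBell (n + 1) r * (n + 1) = (r * (n + 1)).choose r * Nat.uniformBell n r := by
  obtain ⟨s, rfl⟩ := Nat.exists_eq_succ_of_ne_zero hr.ne'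
  have hchoose := Nat.add_one_mul_choose_eq (n * (s + 1) + s) s
  rw [Nat.uniformBell_succ_left]
  refine Nat.eq_of_mul_eq_mul_left hr ?_
  have hsize : (s + 1) * (n + 1) = n * (s + 1) + s + 1 := by ring
  simp only [Nat.succ_eq_add_one, hsize, Nat.add_sub_cancel, ← add_assoc]
  linear_combination Nat.uniformBell n (s + 1) * hchoose

theorem card_matchingsOn (hr : 0 < r) (hV : #V = r * n) :
    #(matchingsOn r V) = Nat.uniformBell n r := by
  induction n generalizing V with
  | zero =>
    obtain rfl : V = ∅ := by simpa using hV
    have : matchingsOn r (∅ : Finset α) = {∅} := eq_singleton_iff_unique_mem.2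
      ⟨by simp [mem_matchingsOn], fun M hM ↦ card_eq_zero.1 (card_eq_of_mem_matchingsOn hr hV hM)⟩
    rw [this, card_singleton, Nat.uniformBell_zero_left]
  | succ n ih =>
    have hedges (M) (hM : M ∈ matchingsOn r V) :
        #((V.powersetCard r).bipartiteAbove (fun M e ↦ e ∈ M) M) = n + 1 := by
      rw [← card_eq_of_mem_matchingsOn hr hV hM, bipartiteAbove, filter_mem_eq_inter,
        inter_eq_right.2 fun e he ↦ mem_powersetCard.2
          ⟨subset_of_mem_matchingsOn hM he, (mem_matchingsOn.1 hM).1 e he⟩]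
    have hmatchings (e) (he : e ∈ V.powersetCard r) :
        #((matchingsOn r V).bipartiteBelow (fun M e ↦ e ∈ M) e) = Nat.uniformBell n r := by
      obtain ⟨heV, hecard⟩ := mem_powersetCard.1 he
      have := card_filter_superset_matchingsOn hr (singleton_mem_matchingsOn hecard) heV
      simp only [singleton_subset_iff] at this
      rw [bipartiteBelow, this]
      exact ih (by rw [card_sdiff_of_subset heV, hV, hecard, mul_add_one, Nat.add_sub_cancel])
    have hcount := card_mul_eq_card_mul _ hedges hmatchings
    rw [card_powersetCard, hV, ← uniformBell_succ_mul_succ n hr] at hcount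
    exact Nat.eq_of_mul_eq_mul_right n.succ_pos hcount

end Matchings

section OrderedMatchings

variable {r n : ℕ}

theorem isOrderedMatching_iff_mem_matchingsOn (hr : 0 < r) {M : Finset (Finset ℕ)} :
    IsOrderedMatching r n M ↔ M ∈ matchingsOn r (Icc 1 (r * n)) :=
  ⟨fun h ↦ mem_matchingsOn.2 h.2, fun h ↦
    ⟨card_eq_of_mem_matchingsOn hr (by simp) h, mem_matchingsOn.1 h⟩⟩

theorem matchingFamilies_eq_matchingsOn (hr : 0 < r) :
    matchingFamilies r n = matchingsOn r (Icc 1 (r * n)) := by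
  ext M
  rw [matchingFamilies, mem_filter, isOrderedMatching_iff_mem_matchingsOn hr, and_iff_right_iff_imp]
  exact fun hM ↦ (mem_filter.1 hM).1

theorem card_matchingFamilies (hr : 0 < r) : #(matchingFamilies r n) = Nat.uniformBell n r := by
  rw [matchingFamilies_eq_matchingsOn hr, card_matchingsOn (n := n) hr (by simp)]

theorem uniformBell_pos (hr : 0 < r) : 0 < Nat.uniformBell n r := by
  refine Nat.pos_of_ne_zero fun h ↦ (n * r).factorial_ne_zero ?_
  rw [← Nat.uniformBell_mul_eq n hr.ne', h, zero_mul, zero_mul]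

end OrderedMatchings

section Cliques

variable {r k : ℕ} {Ps : Set (Finset (Finset ℕ))} {K L M : Finset (Finset ℕ)}

theorem FormsPattern.image {e f : Finset ℕ} {P : Finset (Finset ℕ)} {φ : ℕ → ℕ}
    (hφ : StrictMonoOn φ ↑(e ∪ f)) (h : FormsPattern r e f P) :
    FormsPattern r (e.image φ) (f.image φ) P := by
  obtain ⟨ψ, hψ, hcover, hpair⟩ := h
  set φinv := Function.invFunOn φ ↑(e ∪ f)
  have hinv : Set.LeftInvOn φinv φ ↑(e ∪ f) := hφ.injOn.leftInvOn_invFunOn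
  have himage {s : Finset ℕ} (hs : s ⊆ e ∪ f) : (s.image φ).image (ψ ∘ φinv) = s.image ψ := by
    rw [image_image]
    exact image_congr fun x hx ↦ congrArg ψ (hinv (hs hx))
  refine ⟨ψ ∘ φinv, ?_, ?_, ?_⟩
  · rw [← image_union, coe_image]
    rintro _ ⟨x, hx, rfl⟩ _ ⟨y, hy, rfl⟩ hxy
    simpa only [Function.comp_apply, hinv hx, hinv hy] using
      hψ hx hy ((hφ.lt_iff_lt hx hy).1 hxy)
  · rw [← image_union, himage subset_rfl, hcover]
  · rw [himage subset_union_left, himage subset_union_right, hpair]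

theorem IsClique.mono (hK : IsClique r Ps K) (hLK : L ⊆ K) : IsClique r Ps L :=
  ⟨fun e he ↦ hK.1 e (hLK he), fun e he f hf ↦ hK.2.1 e (hLK he) f (hLK hf),
    fun e he f hf ↦ hK.2.2 e (hLK he) f (hLK hf)⟩

theorem IsClique.mem_matchingsOn_biUnion (hK : IsClique r Ps K) :
    K ∈ matchingsOn r (K.biUnion id) :=
  mem_matchingsOn.2 ⟨hK.1, fun e he f hf ↦ hK.2.1 e he f hf, rfl⟩

theorem IsClique.image {φ : ℕ → ℕ} (hφ : StrictMonoOn φ ↑(K.biUnion id))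
    (hK : IsClique r Ps K) : IsClique r Ps (K.image (Finset.image φ)) := by
  obtain ⟨hcard, hdisj, -⟩ :=
    mem_matchingsOn.1 (image_mem_matchingsOn hφ.injOn hK.mem_matchingsOn_biUnion)
  refine ⟨hcard, fun e he f hf ↦ hdisj he hf, ?_⟩
  simp only [forall_mem_image]
  intro e he f hf hne
  obtain ⟨P, hP, hform⟩ := hK.2.2 e he f hf (ne_of_apply_ne _ hne)
  exact ⟨P, hP, hform.image <| hφ.mono <| coe_subset.2 <|
    union_subset (subset_biUnion_of_mem id he) (subset_biUnion_of_mem id hf)⟩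

theorem exists_strictMonoOn_image_eq_Icc {α : Type*} [LinearOrder α] (U : Finset α) :
    ∃ φ : α → ℕ, StrictMonoOn φ U ∧ U.image φ = Icc 1 #U := by
  have hmono : StrictMonoOn (fun x ↦ #{y ∈ U | y ≤ x}) U := fun x _ y hy hxy ↦
    card_lt_card <| (ssubset_iff_of_subset <| monotone_filter_right U
      fun z _ hz ↦ hz.trans hxy.le).2 ⟨y, by simpa using hy, by simp [hxy]⟩
  refine ⟨_, hmono, eq_of_subset_of_card_le (image_subset_iff.2 fun x hx ↦ ?_) ?_⟩
  · exact mem_Icc.2 ⟨card_pos.2 ⟨x, by simpa using hx⟩, card_filter_le _ _⟩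
  · rw [card_image_of_injOn hmono.injOn, Nat.card_Icc, Nat.add_sub_cancel]

theorem cliqueCount_eq_card_filter (hr : 0 < r) :
    cliqueCount r Ps k = #{K ∈ matchingsOn r (Icc 1 (r * k)) | IsClique r Ps K} := by
  rw [← matchingFamilies_eq_matchingsOn hr, matchingFamilies, filter_filter, cliqueCount]

theorem card_filter_isClique_matchingsOn_le (hr : 0 < r) {U : Finset ℕ} (hU : #U = r * k) :
    #{K ∈ matchingsOn r U | IsClique r Ps K} ≤ cliqueCount r Ps k := by
  obtain ⟨φ, hφ, himage⟩ := exists_strictMonoOn_image_eq_Icc U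
  rw [cliqueCount_eq_card_filter hr, ← hU, ← himage]
  refine card_le_card_of_injOn (Finset.image (Finset.image φ)) (fun K hK ↦ ?_) ?_
  · obtain ⟨hKU, hK⟩ := mem_filter.1 hK
    refine mem_filter.2 ⟨image_mem_matchingsOn hφ.injOn hKU, hK.image ?_⟩
    rwa [(mem_matchingsOn.1 hKU).2.2]
  · refine (image_injOn_powerset_of_injOn (image_injOn_powerset_of_injOn hφ.injOn)).mono ?_
    exact fun K hK ↦ (mem_filter.1 (mem_filter.1 hK).1).1

theorem le_zClique_iff : k ≤ zClique r Ps M ↔ ∃ K ⊆ M, IsClique r Ps K ∧ #K = k := by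
  have hne : {k | ∃ K ⊆ M, IsClique r Ps K ∧ #K = k}.Nonempty :=
    ⟨0, ∅, by simp, by simp [IsClique], rfl⟩
  have hbdd : BddAbove {k | ∃ K ⊆ M, IsClique r Ps K ∧ #K = k} := by
    refine ⟨#M, ?_⟩
    rintro _ ⟨K, hKM, -, rfl⟩
    exact card_le_card hKM
  refine ⟨fun hk ↦ ?_, fun hK ↦ le_csSup hbdd hK⟩
  obtain ⟨K, hKM, hK, hcard⟩ : ∃ K ⊆ M, IsClique r Ps K ∧ #K = zClique r Ps M :=
    Nat.sSup_mem hne hbdd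
  obtain ⟨L, hLK, hL⟩ := exists_subset_card_eq (hk.trans hcard.ge)
  exact ⟨L, hLK.trans hKM, hK.mono hLK, hL⟩

end Cliques

section Traces

theorem card_le_pow_of_forall_length_eq {α : Type*} {S : Finset (List α)} {A : Finset α} {n : ℕ}
    (hlength : ∀ w ∈ S, w.length = n) (hletters : ∀ w ∈ S, ∀ a ∈ w, a ∈ A) : #S ≤ #A ^ n := by
  have hcover : S ⊆ (Fintype.piFinset fun _ : Fin n ↦ A).image List.ofFn := by
    intro w hw
    obtain rfl := hlength w hw
    exact mem_image.2 ⟨w.get, Fintype.mem_piFinset.2 fun i ↦ hletters w hw _ (w.get_mem i),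
      List.ofFn_get w⟩
  calc #S ≤ _ := card_le_card hcover
    _ ≤ _ := card_image_le
    _ = #A ^ n := by rw [Fintype.card_piFinset_const]

variable {r k : ℕ} {M : Finset (Finset ℕ)}

theorem IsOrderedMatching.mem_Icc_of_mem_trace (hM : IsOrderedMatching r k M) {i : ℕ}
    (hi : i ∈ trace r k M) : i ∈ Icc 1 r := by
  obtain ⟨-, hcard, hdisj, hcover⟩ := hM
  obtain ⟨j, hj, rfl⟩ := List.mem_map.1 hi
  have hjV : j + 1 ∈ Icc 1 (r * k) := by simpa [Nat.succ_le_iff] using hj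
  obtain ⟨e, he, hje : j + 1 ∈ e⟩ := mem_biUnion.1 (hcover ▸ hjV)
  refine mem_Icc.2 ⟨card_pos.2 ⟨j + 1, mem_filter.2 ⟨hjV, le_rfl, e, he, hje, hje⟩⟩, ?_⟩
  rw [← hcard e he]
  refine card_le_card fun x hx ↦ ?_
  obtain ⟨-, -, f, hf, hjf, hxf⟩ := mem_filter.1 hx
  obtain rfl : f = e := by
    by_contra hne
    exact disjoint_left.1 (hdisj f hf e he hne) hjf hje
  exact hxf

theorem cliqueCount_le_pow_of_trace_ne {Ps : Set (Finset (Finset ℕ))}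
    (hrec : ∀ M N : Finset (Finset ℕ), IsOrderedMatching r k M → IsOrderedMatching r k N →
      IsClique r Ps M → IsClique r Ps N → M ≠ N → trace r k M ≠ trace r k N) :
    cliqueCount r Ps k ≤ (r ^ r) ^ k := by
  rw [cliqueCount, ← pow_mul]
  set cliques := filter (fun M ↦ IsOrderedMatching r k M ∧ IsClique r Ps M) _
  have hmem {M} (hM : M ∈ cliques) : IsOrderedMatching r k M ∧ IsClique r Ps M :=
    (mem_filter.1 hM).2
  have hinj : Set.InjOn (trace r k) cliques := fun M hM N hN ↦
    not_imp_not.1 <| hrec M N (hmem hM).1 (hmem hN).1 (hmem hM).2 (hmem hN).2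
  rw [← card_image_of_injOn hinj]
  calc #(cliques.image (trace r k)) ≤ #(Icc 1 r) ^ (r * k) :=
        card_le_pow_of_forall_length_eq (forall_mem_image.2 fun M _ ↦ by simp [trace])
          (forall_mem_image.2 fun M hM _ hi ↦ (hmem hM).1.mem_Icc_of_mem_trace hi)
    _ = r ^ (r * k) := by rw [Nat.card_Icc, Nat.add_sub_cancel]

end Traces

section FirstMoment

variable {r n k : ℕ} {Ps : Set (Finset (Finset ℕ))} {A A' : Finset (Finset ℕ) → Prop}

theorem prob_mono (h : ∀ M, A M → A' M) : prob r n A ≤ prob r n A' := by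
  unfold prob
  gcongr with M
  exact h M

theorem prob_nonneg : 0 ≤ prob r n A := by
  unfold prob
  positivity

theorem prob_not (hr : 0 < r) : prob r n (fun M ↦ ¬ A M) = 1 - prob r n A := by
  have hpos : (0 : ℝ) < #(matchingFamilies r n) :=
    mod_cast (card_matchingFamilies hr).symm ▸ uniformBell_pos hr
  unfold prob
  rw [eq_sub_iff_add_eq', ← add_div, div_eq_one_iff_eq hpos.ne']
  norm_cast
  convert card_filter_add_card_filter_not (s := matchingFamilies r n) A

theorem card_filter_exists_isClique_le (hr : 0 < r) {V : Finset ℕ} (hV : #V = r * n) :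
    #{M ∈ matchingsOn r V | ∃ K ⊆ M, IsClique r Ps K ∧ #K = k} ≤
      (r * n).choose (r * k) * (cliqueCount r Ps k * Nat.uniformBell (n - k) r) := by
  let cliquesOn (U : Finset ℕ) := (matchingsOn r U).filter (IsClique r Ps)
  let extensions (K : Finset (Finset ℕ)) := (matchingsOn r V).filter (K ⊆ ·)
  have hcover : (matchingsOn r V).filter (fun M ↦ ∃ K ⊆ M, IsClique r Ps K ∧ #K = k) ⊆
      (V.powersetCard (r * k)).biUnion fun U ↦ (cliquesOn U).biUnion extensions := by
    intro M hMK
    obtain ⟨hM, K, hKM, hK, rfl⟩ := mem_filter.1 hMK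
    have hKV : K.biUnion id ⊆ V :=
      biUnion_subset.2 fun e he ↦ subset_of_mem_matchingsOn hM (hKM he)
    have hKcard := card_eq_mul_card_of_mem_matchingsOn hK.mem_matchingsOn_biUnion
    simp only [mem_biUnion, mem_powersetCard, cliquesOn, extensions, mem_filter]
    exact ⟨_, ⟨hKV, hKcard⟩, K, ⟨hK.mem_matchingsOn_biUnion, hK⟩, hM, hKM⟩
  have hextensions {U} (hU : U ∈ V.powersetCard (r * k)) :
      #((cliquesOn U).biUnion extensions) ≤ cliqueCount r Ps k * Nat.uniformBell (n - k) r := by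
    obtain ⟨hUV, hUcard⟩ := mem_powersetCard.1 hU
    have hrest : #(V \ U) = r * (n - k) := by
      rw [card_sdiff_of_subset hUV, hV, hUcard, Nat.mul_sub]
    refine (card_biUnion_le_card_mul _ _ (Nat.uniformBell (n - k) r) fun K hK ↦ ?_).trans
      (Nat.mul_le_mul_right _ (card_filter_isClique_matchingsOn_le hr hUcard))
    rw [card_filter_superset_matchingsOn hr (mem_filter.1 hK).1 hUV, card_matchingsOn hr hrest]
  rw [← hV, ← card_powersetCard]
  exact (card_le_card hcover).trans (card_biUnion_le_card_mul _ _ _ fun U hU ↦ hextensions hU)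

theorem choose_mul_factorial_mul_uniformBell_le (hr : 0 < r) :
    (r * n).choose (r * k) * (r * k).factorial * Nat.uniformBell (n - k) r ≤
      (r.factorial * n) ^ k * Nat.uniformBell n r := by
  obtain hnk | hkn := lt_or_ge n k
  · rw [Nat.choose_eq_zero_of_lt (Nat.mul_lt_mul_of_pos_left hnk hr), zero_mul, zero_mul]
    exact Nat.zero_le _
  obtain ⟨m, rfl⟩ := Nat.exists_eq_add_of_le' hkn
  have hfactorial : (m + k).factorial ≤ m.factorial * (m + k) ^ k := by
    have := Nat.factorial_mul_descFactorial hkn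
    rw [Nat.add_sub_cancel] at this
    exact this ▸ Nat.mul_le_mul_left _ (Nat.descFactorial_le_pow _ _)
  have hchoose : (r * (m + k)).choose (r * k) * (r * k).factorial * (m * r).factorial =
      ((m + k) * r).factorial := by
    have := Nat.choose_mul_factorial_mul_factorial (Nat.mul_le_mul_left r hkn)
    rw [← Nat.mul_sub, Nat.add_sub_cancel] at this
    rw [mul_comm m, mul_comm (m + k), this]
  rw [Nat.add_sub_cancel]
  refine Nat.le_of_mul_le_mul_right ?_ (by positivity : 0 < r.factorial ^ m * m.factorial)
  calc _ = (r * (m + k)).choose (r * k) * (r * k).factorial *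
          (Nat.uniformBell m r * r.factorial ^ m * m.factorial) := by ring
    _ = Nat.uniformBell (m + k) r * r.factorial ^ (m + k) * (m + k).factorial := by
        rw [Nat.uniformBell_mul_eq m hr.ne', hchoose, Nat.uniformBell_mul_eq _ hr.ne']
    _ ≤ Nat.uniformBell (m + k) r * r.factorial ^ (m + k) * (m.factorial * (m + k) ^ k) := by
        gcongr
    _ = _ := by rw [mul_pow]; ring

theorem prob_le_zClique_le (hr : 0 < r) :
    prob r n (fun M ↦ k ≤ zClique r Ps M) ≤
      cliqueCount r Ps k * (r.factorial * n : ℝ) ^ k / (r * k).factorial := by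
  have hpos : (0 : ℝ) < Nat.uniformBell n r := mod_cast uniformBell_pos hr
  rw [prob, card_matchingFamilies hr, matchingFamilies_eq_matchingsOn hr]
  simp only [le_zClique_iff]
  rw [div_le_div_iff₀ hpos (by positivity)]
  norm_cast
  calc _ ≤ (r * n).choose (r * k) * (cliqueCount r Ps k * Nat.uniformBell (n - k) r) *
          (r * k).factorial := Nat.mul_le_mul_right _ (card_filter_exists_isClique_le hr (by simp))
    _ = cliqueCount r Ps k *
          ((r * n).choose (r * k) * (r * k).factorial * Nat.uniformBell (n - k) r) := by ring
    _ ≤ cliqueCount r Ps k * ((r.factorial * n) ^ k * Nat.uniformBell n r) :=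
        Nat.mul_le_mul_left _ (choose_mul_factorial_mul_uniformBell_le hr)
    _ = _ := by ring

theorem pow_div_factorial_le_half_pow {x : ℝ} (hx : 0 ≤ x)
    (h : 2 * Real.exp r * x ≤ (r * k : ℝ) ^ r) :
    x ^ k / (r * k).factorial ≤ (1 / 2) ^ k := by
  have hexp : (r * k : ℝ) ^ (r * k) ≤ Real.exp r ^ k * (r * k).factorial := by
    rw [← div_le_iff₀ (by positivity), ← Real.exp_nat_mul, mul_comm (k : ℝ)]
    exact Real.pow_div_factorial_le_exp (x := r * k) (by positivity) _
  have hpow : Real.exp r ^ k * (2 * x) ^ k ≤ Real.exp r ^ k * (r * k).factorial := by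
    calc Real.exp r ^ k * (2 * x) ^ k = (2 * Real.exp r * x) ^ k := by
          rw [← mul_pow, mul_left_comm, mul_assoc]
      _ ≤ ((r * k : ℝ) ^ r) ^ k := by gcongr
      _ ≤ _ := by rwa [← pow_mul]
  have hcancel : 2 ^ k * x ^ k ≤ (r * k).factorial := by
    rw [← mul_pow]
    exact le_of_mul_le_mul_left hpow (by positivity)
  rw [div_le_iff₀ (by positivity), one_div, inv_pow, ← div_eq_inv_mul, le_div_iff₀' (by positivity)]
  exact hcancel

theorem prob_le_zClique_le_half_pow (hr : 0 < r) {B : ℕ} (hcount : cliqueCount r Ps k ≤ B ^ k)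
    (hk : 2 * Real.exp r * (B * (r.factorial * n)) ≤ (r * k : ℝ) ^ r) :
    prob r n (fun M ↦ k ≤ zClique r Ps M) ≤ (1 / 2) ^ k := by
  calc _ ≤ cliqueCount r Ps k * (r.factorial * n : ℝ) ^ k / (r * k).factorial :=
        prob_le_zClique_le hr
    _ ≤ B ^ k * (r.factorial * n : ℝ) ^ k / (r * k).factorial := by
        gcongr
        exact mod_cast hcount
    _ = (B * (r.factorial * n : ℝ)) ^ k / (r * k).factorial := by rw [mul_pow (B : ℝ)]
    _ ≤ (1 / 2) ^ k := pow_div_factorial_le_half_pow (by positivity) hk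

end FirstMoment

theorem mul_le_pow_of_mul_rpow_le {r : ℕ} (hr : 0 < r) {C x y : ℝ} (hC : 1 ≤ C) (hx : 0 ≤ x)
    (h : C * x ^ ((1 : ℝ) / r) ≤ y) : C * x ≤ y ^ r := by
  calc C * x ≤ C ^ r * x := by
        gcongr
        exact le_self_pow₀ hC hr.ne'
    _ = (C * x ^ ((1 : ℝ) / r)) ^ r := by
        rw [mul_pow, one_div, Real.rpow_inv_natCast_pow hx hr.ne']
    _ ≤ y ^ r := by gcongr

theorem reconstructible_upper_bound_general (r : ℕ) (hr : 0 < r) (Ps : Set (Finset (Finset ℕ)))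
    (B : ℕ) (hcount : ∀ᶠ k in Filter.atTop, cliqueCount r Ps k ≤ B ^ k) :
    ∃ C : ℝ, 0 < C ∧
      Filter.Tendsto
        (fun n : ℕ ↦ prob r n fun M ↦ (zClique r Ps M : ℝ) ≤ C * (n : ℝ) ^ ((1 : ℝ) / (r : ℝ)))
        Filter.atTop (nhds 1) := by
  set D : ℝ := 2 * Real.exp r * (B * r.factorial)
  have hD : 0 ≤ D := by positivity
  have hC : 0 < D + 1 := by positivity
  -- The summand `1` ensures `1 ≤ C`, so that `C * n ≤ C ^ r * n`.
  refine ⟨D + 1, hC, ?_⟩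
  let t (n : ℕ) : ℝ := (D + 1) * (n : ℝ) ^ ((1 : ℝ) / (r : ℝ))
  have htendsto : Filter.Tendsto (fun n ↦ ⌈t n⌉₊) Filter.atTop Filter.atTop :=
    tendsto_nat_ceil_atTop.comp <| .const_mul_atTop hC <|
      (tendsto_rpow_atTop (by positivity)).comp tendsto_natCast_atTop_atTop
  have hsize (n : ℕ) : D * n ≤ (r * ⌈t n⌉₊ : ℝ) ^ r := by
    have hle : t n ≤ r * ⌈t n⌉₊ :=
      (Nat.le_ceil _).trans (mod_cast Nat.le_mul_of_pos_left _ hr)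
    have := mul_le_pow_of_mul_rpow_le hr (by linarith) n.cast_nonneg hle
    linarith [n.cast_nonneg (α := ℝ)]
  have hbound : ∀ᶠ n in Filter.atTop,
      prob r n (fun M ↦ ¬ (zClique r Ps M : ℝ) ≤ t n) ≤ (1 / 2) ^ ⌈t n⌉₊ := by
    filter_upwards [htendsto.eventually hcount] with n hn
    have himp (M) (hM : ¬ (zClique r Ps M : ℝ) ≤ t n) : ⌈t n⌉₊ ≤ zClique r Ps M :=
      Nat.ceil_le.2 (not_le.1 hM).le
    calc _ ≤ prob r n (fun M ↦ ⌈t n⌉₊ ≤ zClique r Ps M) := prob_mono himp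
      _ ≤ (1 / 2) ^ ⌈t n⌉₊ := prob_le_zClique_le_half_pow hr hn (by linarith [hsize n])
  have hzero := squeeze_zero' (.of_forall fun _ ↦ prob_nonneg) hbound <|
    (tendsto_pow_atTop_nhds_zero_of_lt_one (by norm_num) (by norm_num)).comp htendsto
  simpa only [prob_not hr, sub_sub_cancel, sub_zero] using hzero.const_sub 1

/-- **Observation (reconstructible families).** If distinct `Ps`-cliques of the same size
`k` partitioning `[rk]` always have distinct traces, then a.a.s.
`z_Ps(RM_n^(r)) = O(n^(1/r))`. -/
theorem reconstructible_upper_bound (r : ℕ) (hr : 2 ≤ r) (Ps : Set (Finset (Finset ℕ)))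
    (hPs : ∀ P ∈ Ps, IsOrderedMatching r 2 P)
    (hrec : ∀ k : ℕ, 1 ≤ k → ∀ M N : Finset (Finset ℕ),
      IsOrderedMatching r k M → IsOrderedMatching r k N →
      IsClique r Ps M → IsClique r Ps N → M ≠ N → trace r k M ≠ trace r k N) :
    ∃ C : ℝ, 0 < C ∧
      Filter.Tendsto
        (fun n : ℕ => prob r n (fun M =>
          (zClique r Ps M : ℝ) ≤ C * (n : ℝ) ^ ((1 : ℝ) / (r : ℝ))))
        Filter.atTop (nhds 1) := by
  exact reconstructible_upper_bound_general r (by positivity) Ps (r ^ r) <|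
    (Filter.eventually_ge_atTop 1).mono fun k hk ↦ cliqueCount_le_pow_of_trace_ne (hrec k hk)
end

section
/- For every r ≥ 2, every harmonious pair {P, Q} of distinct r-patterns, and every k ≥ 1, the number of {P, Q}-cliques of size k whose edges partition [rk] equals k!. -/
open Finset
open scoped Classical

/-!
Sort the edges of a matching by their minima. If a pattern has composition `λ`, then whether the
`i`-th vertex of the first edge precedes the `j`-th vertex of the second depends only on the parts
of `λ` containing `i` and `j` and, when these coincide, on whether that block of the pattern is
`A^t B^t` or `B^t A^t`. Distinct patterns with the same composition therefore differ in the
orientation of some block. In a `{P, Q}`-clique the order in which the edges traverse that block is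
a permutation `σ` of the edges sorted by minima, and it decides for each pair of edges whether they
form `P` or `Q`; hence `σ` determines the clique. Conversely, every `σ` is realised by placing the
blocks one after another and traversing each of them in the order of `a`, `-a`, `σ a` or `-σ a`,
according to its orientations in `P` and `Q`.
-/

namespace OrderedMatching

section Rank

variable {ι α β : Type*} [Fintype ι] [LinearOrder α] [LinearOrder β]

/-- The rank of the value `f x` among all values of `f`, counted from `1`. -/
def rank (f : ι → α) (x : ι) : ℕ := #{y | f y ≤ f x}

lemma rank_le_rank_iff {f : ι → α} {x y : ι} : rank f x ≤ rank f y ↔ f x ≤ f y := by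
  refine ⟨fun h => ?_, fun h => card_le_card fun z => by
    simpa only [mem_filter_univ] using fun hz => hz.trans h⟩
  contrapose! h
  refine card_lt_card <| (ssubset_iff_of_subset fun z => ?_).2 ⟨x, by simp, by simpa using h⟩
  simpa only [mem_filter_univ] using fun hz => hz.trans h.le

lemma rank_lt_rank_iff {f : ι → α} {x y : ι} : rank f x < rank f y ↔ f x < f y :=
  lt_iff_lt_of_le_iff_le rank_le_rank_iff

lemma rank_injective {f : ι → α} (hf : Function.Injective f) : Function.Injective (rank f) :=
  fun _ _ h => hf <| le_antisymm (rank_le_rank_iff.1 h.le) (rank_le_rank_iff.1 h.ge)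

lemma image_rank {f : ι → α} (hf : Function.Injective f) :
    univ.image (rank f) = Icc 1 (Fintype.card ι) := by
  refine eq_of_subset_of_card_le (fun n hn => ?_) ?_
  · obtain ⟨x, rfl⟩ := mem_image_univ_iff_mem_range.1 hn
    exact mem_Icc.2 ⟨card_pos.2 ⟨x, by simp⟩, card_le_univ _⟩
  · rw [card_image_of_injective _ (rank_injective hf), Nat.card_Icc, card_univ,
      Nat.add_sub_cancel]

lemma rank_congr {f : ι → α} {g : ι → β} (h : ∀ x y, f x < f y ↔ g x < g y) :
    rank f = rank g := by
  funext x
  simp only [rank, ← not_lt, h]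

lemma injective_of_image_eq_Icc {f : ι → ℕ} (hf : univ.image f = Icc 1 (Fintype.card ι)) :
    Function.Injective f := by
  rw [← Set.injOn_univ, ← coe_univ, ← card_image_iff, hf, Nat.card_Icc, card_univ,
    Nat.add_sub_cancel]

lemma rank_eq_self {f : ι → ℕ} (hf : univ.image f = Icc 1 (Fintype.card ι)) : rank f = f := by
  funext x
  have hx : f x ∈ Icc 1 (Fintype.card ι) := hf ▸ mem_image_of_mem f (mem_univ x)
  have himage : ({y | f y ≤ f x} : Finset ι).image f = Icc 1 (f x) := by
    ext n
    rw [← filter_image (p := (· ≤ f x)), hf]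
    simp only [mem_filter, mem_Icc] at hx ⊢
    omega
  rw [rank, ← card_image_of_injective _ (injective_of_image_eq_Icc hf), himage, Nat.card_Icc,
    Nat.add_sub_cancel]

end Rank

section Sorting

lemma exists_strictMono_image_eq {α β : Type*} [DecidableEq α] [LinearOrder β] {s : Finset α}
    {f : α → β} (hf : Set.InjOn f s) {k : ℕ} (hs : #s = k) :
    ∃ g : Fin k → α, StrictMono (f ∘ g) ∧ univ.image g = s := by
  let : LinearOrder s := LinearOrder.lift' (fun x : s => f x) hf.injective
  let e := Fintype.orderIsoFinOfCardEq s (k := k) (by rw [Fintype.card_coe, hs])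
  refine ⟨fun a => e a, fun a b hab => e.strictMono hab, ?_⟩
  ext x
  simp only [mem_image_univ_iff_mem_range, Set.mem_range]
  exact ⟨by rintro ⟨a, rfl⟩; exact (e a).2, fun hx => ⟨e.symm ⟨x, hx⟩, by simp⟩⟩

lemma exists_perm_lt_iff {α : Type*} [LinearOrder α] {k : ℕ} {g : Fin k → α}
    (hg : Function.Injective g) : ∃ σ : Equiv.Perm (Fin k), ∀ a b, σ a < σ b ↔ g a < g b := by
  have hmono : StrictMono (g ∘ Tuple.sort g) :=
    (Tuple.monotone_sort g).strictMono_of_injective (hg.comp (Equiv.injective _))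
  exact ⟨(Tuple.sort g)⁻¹, fun a b => by simp [← hmono.lt_iff_lt]⟩

lemma perm_eq_of_lt_iff {α : Type*} [LinearOrder α] [WellFoundedLT α] {σ τ : Equiv.Perm α}
    (h : ∀ a b, σ a < σ b ↔ τ a < τ b) : σ = τ := by
  let e : α ≃o α := ⟨σ.symm.trans τ, fun {a b} => by
    simpa using le_iff_le_iff_lt_iff_lt.2 (h (σ.symm b) (σ.symm a)).symm⟩
  ext a
  simpa [e] using (DFunLike.congr_fun (Subsingleton.elim e (OrderIso.refl α)) (σ a)).symm

lemma injOn_min_of_pairwiseDisjoint {α : Type*} [LinearOrder α] {M : Finset (Finset α)}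
    (hne : ∀ e ∈ M, e.Nonempty) (hM : (M : Set (Finset α)).PairwiseDisjoint id) :
    Set.InjOn Finset.min (M : Set (Finset α)) := by
  intro e he f hf h
  by_contra hef
  obtain ⟨x, hx⟩ := min_of_nonempty (hne e he)
  exact disjoint_left.1 (hM he hf hef) (mem_of_min hx) (mem_of_min (h ▸ hx))

end Sorting

section Enumeration

variable {r k : ℕ}

/-- The family of sets whose elements are listed by the rows of `y`. -/
def edges (y : Fin k → Fin r → ℕ) : Finset (Finset ℕ) :=
  univ.image fun a => univ.image (y a)

lemma mem_edges {y : Fin k → Fin r → ℕ} {e : Finset ℕ} :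
    e ∈ edges y ↔ ∃ a, univ.image (y a) = e := by
  simp [edges]

lemma edges_fin_two (y : Fin 2 → Fin r → ℕ) :
    edges y = {univ.image (y 0), univ.image (y 1)} := by
  simp [edges, Fin.univ_succ]

lemma biUnion_edges (y : Fin k → Fin r → ℕ) :
    (edges y).biUnion id = univ.image (Function.uncurry y) := by
  ext x
  simp [edges]

/-- The sequences `u` and `v` interleave according to `R`: the `i`-th term of `u` is smaller than
the `j`-th term of `v` exactly when `R i j`. This encodes the pattern formed by two edges. -/
def Interleaves (u v : Fin r → ℕ) (R : Fin r → Fin r → Prop) : Prop :=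
  ∀ i j, u i < v j ↔ R i j

variable [NeZero r]

/-- The rows of `y` list pairwise disjoint `r`-element sets in increasing order of their minima,
and each row is increasing. -/
structure IsSorted (y : Fin k → Fin r → ℕ) : Prop where
  strictMono_min : StrictMono fun a => y a 0
  strictMono : ∀ a, StrictMono (y a)
  injective : Function.Injective (Function.uncurry y)

/-- The rows of `y` are the edges of an ordered `r`-matching of size `k`, sorted by their minima. -/
structure IsEnumeration (y : Fin k → Fin r → ℕ) : Prop extends IsSorted y where
  image_eq : univ.image (Function.uncurry y) = Icc 1 (r * k)

namespace IsSorted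

variable {y z : Fin k → Fin r → ℕ}

lemma ne (hy : IsSorted y) {a b : Fin k} (hab : a ≠ b) (i j : Fin r) : y a i ≠ y b j :=
  fun h => hab (Prod.mk.inj (hy.injective (a₁ := (a, i)) (a₂ := (b, j)) h)).1

lemma disjoint (hy : IsSorted y) {a b : Fin k} (hab : a ≠ b) :
    Disjoint (univ.image (y a)) (univ.image (y b)) := by
  simpa [disjoint_left] using fun i j => (hy.ne hab i j).symm

lemma image_injective (hy : IsSorted y) : Function.Injective fun a => univ.image (y a) := by
  intro a b h
  by_contra hab
  have hself : Disjoint (univ.image (y a)) (univ.image (y a)) := by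
    simpa only [← h] using hy.disjoint hab
  exact (univ_nonempty.image (y a)).ne_empty (disjoint_self.1 hself)

lemma card_eq_of_mem_edges (hy : IsSorted y) {e : Finset ℕ} (he : e ∈ edges y) : #e = r := by
  obtain ⟨a, rfl⟩ := mem_edges.1 he
  rw [card_image_of_injective _ (hy.strictMono a).injective, card_univ, Fintype.card_fin]

lemma pairwiseDisjoint_edges (hy : IsSorted y) :
    (edges y : Set (Finset ℕ)).PairwiseDisjoint id := by
  intro e he f hf hef
  obtain ⟨a, rfl⟩ := mem_edges.1 he
  obtain ⟨b, rfl⟩ := mem_edges.1 hf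
  exact hy.disjoint fun hab => hef (by rw [hab])

lemma comp_strictMono (hy : IsSorted y) {m : ℕ} {g : Fin m → Fin k} (hg : StrictMono g) :
    IsSorted (y ∘ g) where
  strictMono_min := hy.strictMono_min.comp hg
  strictMono a := hy.strictMono (g a)
  injective := hy.injective.comp (hg.injective.prodMap Function.injective_id)

lemma map (hy : IsSorted y) {φ : ℕ → ℕ} (hφ : StrictMonoOn φ (Set.range (Function.uncurry y))) :
    IsSorted fun a i => φ (y a i) where
  strictMono_min a b hab := hφ ⟨(a, 0), rfl⟩ ⟨(b, 0), rfl⟩ (hy.strictMono_min hab)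
  strictMono a i j hij := hφ ⟨(a, i), rfl⟩ ⟨(a, j), rfl⟩ (hy.strictMono a hij)
  injective z w h := hy.injective (hφ.injOn ⟨z, rfl⟩ ⟨w, rfl⟩ h)

lemma exists_row_eq (hy : IsSorted y) (hz : IsSorted z) (h : edges y = edges z) (a : Fin k) :
    ∃ b, y a = z b := by
  obtain ⟨b, hb⟩ := mem_edges.1 (h ▸ mem_edges.2 ⟨a, rfl⟩ : univ.image (y a) ∈ edges z)
  refine ⟨b, ((hy.strictMono a).range_inj (hz.strictMono b)).1 ?_⟩
  simpa using congrArg ((↑) : Finset ℕ → Set ℕ) hb.symm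

lemma eq_of_edges_eq (hy : IsSorted y) (hz : IsSorted z) (h : edges y = edges z) : y = z := by
  have hmin : (fun a => y a 0) = fun a => z a 0 := by
    refine (hy.strictMono_min.range_inj hz.strictMono_min).1 (Set.Subset.antisymm ?_ ?_)
    · rintro _ ⟨a, rfl⟩
      obtain ⟨b, hb⟩ := hy.exists_row_eq hz h a
      exact ⟨b, by simp only [hb]⟩
    · rintro _ ⟨a, rfl⟩
      obtain ⟨b, hb⟩ := hz.exists_row_eq hy h.symm a
      exact ⟨b, by simp only [hb]⟩
  funext a
  obtain ⟨b, hb⟩ := hy.exists_row_eq hz h a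
  have hab : z b 0 = z a 0 := hb ▸ congrFun hmin a
  rw [hb, hz.strictMono_min.injective hab]

lemma lt_iff_lt_of_interleaves (hy : IsSorted y) (hz : IsSorted z)
    (h : ∀ a b, a < b → Interleaves (y a) (y b) fun i j => z a i < z b j) (a b : Fin k)
    (i j : Fin r) : y a i < y b j ↔ z a i < z b j := by
  rcases lt_trichotomy a b with hab | rfl | hba
  · exact h a b hab i j
  · rw [(hy.strictMono a).lt_iff_lt, (hz.strictMono a).lt_iff_lt]
  · rw [← not_iff_not, not_lt, not_lt, (hy.ne hba.ne j i).le_iff_lt, (hz.ne hba.ne j i).le_iff_lt]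
    exact h b a hba j i

end IsSorted

namespace IsEnumeration

variable {y z : Fin k → Fin r → ℕ}

lemma apply_mem_Icc (hy : IsEnumeration y) (a : Fin k) (i : Fin r) : y a i ∈ Icc 1 (r * k) :=
  hy.image_eq ▸ mem_image_of_mem (Function.uncurry y) (mem_univ (a, i))

lemma one_le_apply (hy : IsEnumeration y) (a : Fin k) (i : Fin r) : 1 ≤ y a i :=
  (mem_Icc.1 (hy.apply_mem_Icc a i)).1

lemma exists_apply_eq (hy : IsEnumeration y) {x : ℕ} (hx : x ∈ Icc 1 (r * k)) :
    ∃ a i, y a i = x := by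
  simpa [← hy.image_eq] using hx

lemma rank_eq (hy : IsEnumeration y) : rank (Function.uncurry y) = Function.uncurry y :=
  rank_eq_self <| by simp [hy.image_eq, mul_comm]

lemma eq_rank_of_interleaves (hz : IsEnumeration z) (hy : IsSorted y)
    (h : ∀ a b, a < b → Interleaves (y a) (y b) fun i j => z a i < z b j) :
    Function.uncurry z = rank (Function.uncurry y) :=
  hz.rank_eq.symm.trans <| rank_congr fun x w =>
    (hy.lt_iff_lt_of_interleaves hz.toIsSorted h x.1 w.1 x.2 w.2).symm

lemma eq_of_interleaves (hy : IsEnumeration y) (hz : IsEnumeration z)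
    (h : ∀ a b, a < b → Interleaves (y a) (y b) fun i j => z a i < z b j) : y = z := by
  have huncurry := hz.eq_rank_of_interleaves hy.toIsSorted h
  rw [hy.rank_eq] at huncurry
  exact (congrArg Function.curry huncurry).symm

lemma isOrderedMatching_edges (hy : IsEnumeration y) : IsOrderedMatching r k (edges y) := by
  refine ⟨?_, fun e => hy.card_eq_of_mem_edges,
    fun e he f hf => hy.pairwiseDisjoint_edges he hf, ?_⟩
  · rw [edges, card_image_of_injective _ hy.image_injective, card_univ, Fintype.card_fin]
  · rw [← hy.image_eq, biUnion_edges]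

end IsEnumeration

lemma exists_isSorted_edges_eq {M : Finset (Finset ℕ)} (hk : #M = k) (hr : ∀ e ∈ M, #e = r)
    (hM : (M : Set (Finset ℕ)).PairwiseDisjoint id) :
    ∃ y : Fin k → Fin r → ℕ, IsSorted y ∧ edges y = M := by
  have hne : ∀ e ∈ M, e.Nonempty := fun e he => card_pos.1 (hr e he ▸ NeZero.pos r)
  obtain ⟨E, hE, rfl⟩ := exists_strictMono_image_eq (injOn_min_of_pairwiseDisjoint hne hM) hk
  have hmem (a : Fin k) : E a ∈ univ.image E := mem_image_of_mem E (mem_univ a)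
  let y (a : Fin k) : Fin r → ℕ := (E a).orderEmbOfFin (hr _ (hmem a))
  have hmin (a : Fin k) : (y a 0 : WithTop ℕ) = (E a).min := by
    rw [← coe_min' (hne _ (hmem a)), ← orderEmbOfFin_zero (hr _ (hmem a)) (NeZero.pos r)]
    rfl
  refine ⟨y, ⟨fun a b hab => ?_, fun a => OrderEmbedding.strictMono _, ?_⟩, ?_⟩
  · simpa only [Function.comp_apply, ← hmin, Nat.cast_lt] using hE hab
  · rintro ⟨a, i⟩ ⟨b, j⟩ (hij : y a i = y b j)
    obtain rfl : a = b := by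
      by_contra hab
      have hEab : E a ≠ E b := fun h => hab (hE.injective (congrArg Finset.min h))
      exact disjoint_left.1 (hM (hmem a) (hmem b) hEab) (orderEmbOfFin_mem _ _ i)
        (hij.symm ▸ orderEmbOfFin_mem (E b) _ j : y a i ∈ E b)
    rw [(OrderEmbedding.strictMono _).injective hij]
  · simp [edges, y]

lemma exists_isEnumeration_edges_eq {M : Finset (Finset ℕ)} (hM : IsOrderedMatching r k M) :
    ∃ y : Fin k → Fin r → ℕ, IsEnumeration y ∧ edges y = M := by
  obtain ⟨hk, hr, hdisj, hunion⟩ := hM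
  obtain ⟨y, hy, rfl⟩ := exists_isSorted_edges_eq hk hr fun e he f hf => hdisj e he f hf
  exact ⟨y, ⟨hy, by rw [← biUnion_edges, hunion]⟩, rfl⟩

end Enumeration

section Pattern

lemma formsPattern_symm {r : ℕ} {e f : Finset ℕ} {P : Finset (Finset ℕ)}
    (h : FormsPattern r e f P) : FormsPattern r f e P := by
  obtain ⟨φ, hφ, himage, hP⟩ := h
  exact ⟨φ, by rwa [union_comm], by rwa [union_comm], by rwa [pair_comm]⟩

variable {r k : ℕ} [NeZero r]

lemma forall_fin_two_of_lt_iff {R : Fin 2 → Fin 2 → Prop} :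
    (∀ a b, a < b → R a b) ↔ R 0 1 := by
  simp [Fin.forall_fin_two]

lemma IsEnumeration.formsPattern_edges_iff {p : Fin 2 → Fin r → ℕ} (hp : IsEnumeration p)
    {R : Fin r → Fin r → Prop} (hR : Interleaves (p 0) (p 1) R) {y : Fin 2 → Fin r → ℕ}
    (hy : IsSorted y) :
    FormsPattern r (univ.image (y 0)) (univ.image (y 1)) (edges p) ↔
      Interleaves (y 0) (y 1) R := by
  have hunion : univ.image (y 0) ∪ univ.image (y 1) = univ.image (Function.uncurry y) := by
    rw [← biUnion_edges, edges_fin_two, biUnion_insert, singleton_biUnion, id, id]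
  simp only [FormsPattern, hunion, coe_image, coe_univ, Set.image_univ]
  constructor
  · rintro ⟨φ, hφ, -, hedges⟩ i j
    have hφy : (fun a i => φ (y a i)) = p := by
      refine (hy.map hφ).eq_of_edges_eq hp.toIsSorted ?_
      rw [edges_fin_two, ← hedges, image_image, image_image]
      rfl
    rw [← hR, ← hφy]
    exact (hφ.lt_iff_lt ⟨(0, i), rfl⟩ ⟨(1, j), rfl⟩).symm
  · intro h
    have hyp (z : Fin 2 × Fin r) : rank (Function.uncurry y) z = Function.uncurry p z := by
      refine (congrFun (hp.eq_rank_of_interleaves hy ?_) z).symm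
      exact forall_fin_two_of_lt_iff.2 fun i j => (h i j).trans (hR i j).symm
    let φ (x : ℕ) : ℕ := #{z : Fin 2 × Fin r | Function.uncurry y z ≤ x}
    have hφ (a : Fin 2) (i : Fin r) : φ (y a i) = p a i := hyp (a, i)
    refine ⟨φ, ?_, ?_, ?_⟩
    · rintro _ ⟨z, rfl⟩ _ ⟨w, rfl⟩ hzw
      exact rank_lt_rank_iff.2 hzw
    · rw [image_image, mul_comm, ← hp.image_eq]
      exact image_congr fun z _ => hyp z
    · rw [image_image, image_image, edges_fin_two]
      simp only [Function.comp_def, hφ]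

lemma IsSorted.isClique_edges_iff {p q : Fin 2 → Fin r → ℕ} (hp : IsEnumeration p)
    (hq : IsEnumeration q) {R S : Fin r → Fin r → Prop} (hR : Interleaves (p 0) (p 1) R)
    (hS : Interleaves (q 0) (q 1) S) {y : Fin k → Fin r → ℕ} (hy : IsSorted y) :
    IsClique r {edges p, edges q} (edges y) ↔
      ∀ a b, a < b → Interleaves (y a) (y b) R ∨ Interleaves (y a) (y b) S := by
  have hforms {a b : Fin k} (hab : a < b) :
      (∃ P ∈ ({edges p, edges q} : Set (Finset (Finset ℕ))),
        FormsPattern r (univ.image (y a)) (univ.image (y b)) P) ↔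
      Interleaves (y a) (y b) R ∨ Interleaves (y a) (y b) S := by
    have hpair : IsSorted (y ∘ ![a, b]) :=
      hy.comp_strictMono (by simpa [Fin.strictMono_iff_lt_succ])
    simpa using or_congr (hp.formsPattern_edges_iff hR hpair) (hq.formsPattern_edges_iff hS hpair)
  refine ⟨fun h a b hab => (hforms hab).1 ?_, fun h => ⟨fun e => hy.card_eq_of_mem_edges,
    fun e he f hf => hy.pairwiseDisjoint_edges he hf, fun e he f hf hef => ?_⟩⟩
  · exact h.2.2 _ (mem_edges.2 ⟨a, rfl⟩) _ (mem_edges.2 ⟨b, rfl⟩) (hy.image_injective.ne hab.ne)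
  · obtain ⟨a, rfl⟩ := mem_edges.1 he
    obtain ⟨b, rfl⟩ := mem_edges.1 hf
    rcases lt_or_gt_of_ne (fun hab => hef (by rw [hab]) : a ≠ b) with hab | hba
    · exact (hforms hab).2 (h a b hab)
    · obtain ⟨P, hP, hform⟩ := (hforms hba).2 (h b a hba)
      exact ⟨P, hP, formsPattern_symm hform⟩

end Pattern

section BlockWord

/-- Comparison of positions `i` and `j` from two interleaved sequences cut into blocks by `L`:
blocks come in the order of their labels, and inside block `l` the whole part of the first sequence
precedes that of the second if `s l = true`, and follows it otherwise. -/
def BlockLT {ι : Type*} (L : ι → ℕ) (s : ℕ → Bool) (i j : ι) : Prop :=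
  L i < L j ∨ L i = L j ∧ s (L i) = true

/-- The index, counted from `0`, of the part of the composition `lam` that contains `i`, where the
parts are consecutive intervals starting at `0`. -/
def blockIndex : List ℕ → ℕ → ℕ
  | [], _ => 0
  | t :: lam, i => if i < t then 0 else blockIndex lam (i - t) + 1

lemma blockIndex_cons_of_lt {t i : ℕ} (lam : List ℕ) (hi : i < t) :
    blockIndex (t :: lam) i = 0 :=
  if_pos hi

lemma blockIndex_cons_add (t i : ℕ) (lam : List ℕ) :
    blockIndex (t :: lam) (t + i) = blockIndex lam i + 1 := by
  simp [blockIndex]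

lemma blockIndex_mono (lam : List ℕ) : Monotone (blockIndex lam) := by
  induction lam with
  | nil => exact monotone_const
  | cons t lam ih =>
    intro i j hij
    have := ih (Nat.sub_le_sub_right hij t)
    simp only [blockIndex]
    split_ifs <;> omega

/-- The block `A^t B^t` (for `b = true`) or `B^t A^t` (for `b = false`). -/
def block (t : ℕ) (b : Bool) : List Bool :=
  List.replicate t b ++ List.replicate t !b

/-- The word with block half-lengths `lam` and first letters of blocks `bs`. -/
def blockWord (lam : List ℕ) (bs : List Bool) : List Bool :=
  (List.zipWith block lam bs).flatten

lemma blockWord_cons (t : ℕ) (lam : List ℕ) (b : Bool) (bs : List Bool) :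
    blockWord (t :: lam) (b :: bs) = block t b ++ blockWord lam bs := by
  simp [blockWord]

lemma length_block (t : ℕ) (b : Bool) : (block t b).length = 2 * t := by
  simp [block, two_mul]

lemma count_block (t : ℕ) (b c : Bool) : (block t b).count c = t := by
  cases b <;> cases c <;> simp [block, List.count_replicate]

lemma lt_iff_eq_of_block_getElem? {t x : ℕ} {b c : Bool} (h : (block t b)[x]? = some c) :
    x < t ↔ b = c := by
  rw [block, List.getElem?_append, List.getElem?_replicate, List.getElem?_replicate] at h
  by_cases hx : x < t
  · simpa [hx] using h
  · simp only [List.length_replicate, hx, ↓reduceIte, Option.ite_none_right_eq_some,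
      Option.some_inj] at h
    simp [hx, ← h.2]

lemma count_take_lt_count {α : Type*} [DecidableEq α] {w : List α} {x : ℕ} {c : α}
    (h : w[x]? = some c) : (w.take x).count c < w.count c := by
  obtain ⟨hx, hc⟩ := List.getElem?_eq_some_iff.1 h
  have hdrop : c ∈ w.drop x := by simp [List.drop_eq_getElem_cons hx, hc]
  rw [← w.take_append_drop x, List.count_append, List.take_append_drop]
  exact Nat.lt_add_of_pos_right (List.count_pos_iff.2 hdrop)

lemma block_append_getElem?_cases {t x : ℕ} {b c : Bool} {w : List Bool}
    (h : (block t b ++ w)[x]? = some c) :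
    (x < 2 * t ∧ (x < t ↔ b = c) ∧ ((block t b ++ w).take x).count c < t) ∨
      ∃ z, x = 2 * t + z ∧ w[z]? = some c ∧
        ((block t b ++ w).take x).count c = t + (w.take z).count c := by
  rcases lt_or_ge x (2 * t) with hx | hx
  · have hlen : x < (block t b).length := by rwa [length_block]
    rw [List.getElem?_append_left hlen] at h
    rw [List.take_append_of_le_length hlen.le]
    exact .inl ⟨hx, lt_iff_eq_of_block_getElem? h,
      (count_take_lt_count h).trans_eq (count_block t b c)⟩
  · obtain ⟨z, rfl⟩ := Nat.exists_eq_add_of_le hx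
    refine .inr ⟨z, rfl, ?_, ?_⟩
    · rwa [← length_block t b, List.getElem?_append_right (by omega), Nat.add_sub_cancel_left] at h
    · rw [← length_block t b, List.take_length_add_append, List.count_append, count_block]

/-- The two counts say which `A` stands at position `x` and which `B` at position `y`: in a pattern
they are the indices of these vertices inside their edges. -/
lemma lt_iff_blockLT {lam : List ℕ} {bs : List Bool} (hlen : bs.length = lam.length) {x y : ℕ}
    (hx : (blockWord lam bs)[x]? = some true) (hy : (blockWord lam bs)[y]? = some false) :
    x < y ↔ BlockLT (blockIndex lam) (bs.getD · true)
      (((blockWord lam bs).take x).count true) (((blockWord lam bs).take y).count false) := by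
  induction lam generalizing bs x y with
  | nil => simp [blockWord] at hx
  | cons t lam ih =>
    obtain ⟨b, bs, rfl⟩ := List.exists_cons_of_length_eq_add_one hlen
    rw [blockWord_cons] at hx hy ⊢
    rcases block_append_getElem?_cases hx with ⟨hxt, hxb, hxc⟩ | ⟨x, rfl, hx, hxc⟩ <;>
    rcases block_append_getElem?_cases hy with ⟨hyt, hyb, hyc⟩ | ⟨y, rfl, hy, hyc⟩
    · rw [BlockLT, blockIndex_cons_of_lt lam hxc, blockIndex_cons_of_lt lam hyc]
      cases b
      · simp only [Bool.false_eq_true, iff_false, iff_true] at hxb hyb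
        simpa using hyb.le.trans (not_lt.1 hxb)
      · simp only [Bool.true_eq_false, iff_false, iff_true] at hxb hyb
        simpa using hxb.trans_le (not_lt.1 hyb)
    · rw [BlockLT, blockIndex_cons_of_lt lam hxc, hyc, blockIndex_cons_add]
      omega
    · rw [BlockLT, blockIndex_cons_of_lt lam hyc, hxc, blockIndex_cons_add]
      omega
    · rw [BlockLT, hxc, hyc, blockIndex_cons_add, blockIndex_cons_add, List.getD_cons_succ]
      simpa [BlockLT] using ih (Nat.succ_injective hlen) hx hy

end BlockWord

section Composition

variable {r : ℕ}

lemma count_take_eq_card {α : Type*} [DecidableEq α] (w : List α) (n : ℕ) (c : α) :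
    (w.take n).count c = #{x ∈ range n | w[x]? = some c} := by
  induction n with
  | zero => simp
  | succ n ih =>
    rw [List.take_add_one, List.count_append, ih, range_add_one, filter_insert]
    cases w[n]? with
    | none => simp
    | some d => by_cases hd : d = c <;> simp [hd]

variable [NeZero r] {p : Fin 2 → Fin r → ℕ}

lemma IsEnumeration.apply_zero_zero {k : ℕ} [NeZero k] {y : Fin k → Fin r → ℕ}
    (hy : IsEnumeration y) : y 0 0 = 1 := by
  have hrk : 0 < r * k := Nat.mul_pos (NeZero.pos r) (NeZero.pos k)
  obtain ⟨a, i, hai⟩ := hy.exists_apply_eq (mem_Icc.2 ⟨le_rfl, hrk⟩)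
  refine le_antisymm ?_ (hy.one_le_apply 0 0)
  calc y 0 0 ≤ y a 0 := hy.strictMono_min.monotone (Fin.zero_le a)
    _ ≤ y a i := (hy.strictMono a).monotone (Fin.zero_le i)
    _ = 1 := hai

lemma IsEnumeration.patternWord_getElem? (hp : IsEnumeration p) (a : Fin 2) (i : Fin r) :
    (patternWord r (edges p))[p a i - 1]? = some (decide (a = 0)) := by
  have hmem := mem_Icc.1 (hp.apply_mem_Icc a i)
  have hrow {b c : Fin 2} {j : Fin r} : p b j ∈ univ.image (p c) ↔ b = c := by
    refine ⟨fun h => ?_, fun h => h ▸ mem_image_of_mem _ (mem_univ j)⟩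
    by_contra hbc
    exact disjoint_left.1 (hp.disjoint hbc) (mem_image_of_mem _ (mem_univ j)) h
  have hone {c : Fin 2} : 1 ∈ univ.image (p c) ↔ 0 = c := by
    simpa only [hp.apply_zero_zero] using hrow (b := 0) (c := c) (j := 0)
  rw [patternWord, List.getElem?_map, List.getElem?_range (by omega), Option.map_some,
    Nat.sub_add_cancel hmem.1]
  simp [edges_fin_two, hone, hrow, -mem_image]

lemma IsEnumeration.count_take_patternWord (hp : IsEnumeration p) (a : Fin 2) (i : Fin r) :
    ((patternWord r (edges p)).take (p a i - 1)).count (decide (a = 0)) = i := by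
  have hbefore : {x ∈ range (p a i - 1) | (patternWord r (edges p))[x]? = some (decide (a = 0))} =
      (Iio i).image fun j => p a j - 1 := by
    ext x
    simp only [mem_filter, mem_range, mem_image, mem_Iio]
    constructor
    · rintro ⟨hx, hletter⟩
      have hle := (mem_Icc.1 (hp.apply_mem_Icc a i)).2
      obtain ⟨b, j, hbj⟩ := hp.exists_apply_eq (x := x + 1) (mem_Icc.2 ⟨by omega, by omega⟩)
      obtain rfl : x = p b j - 1 := by omega
      rw [hp.patternWord_getElem?, Option.some_inj, decide_eq_decide] at hletter
      obtain rfl : b = a := by omega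
      exact ⟨j, (hp.strictMono b).lt_iff_lt.1 (by omega), rfl⟩
    · rintro ⟨j, hj, rfl⟩
      exact ⟨Nat.sub_lt_sub_right (hp.one_le_apply a j) (hp.strictMono a hj),
        hp.patternWord_getElem? a j⟩
  have hinj : Function.Injective fun j => p a j - 1 := fun j l hjl =>
    (hp.strictMono a).injective <|
      (tsub_left_inj (hp.one_le_apply a j) (hp.one_le_apply a l)).1 hjl
  rw [count_take_eq_card, hbefore, card_image_of_injective _ hinj, Fin.card_Iio]

lemma IsEnumeration.exists_interleaves_blockLT (hp : IsEnumeration p) {lam : List ℕ}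
    (h : HasComposition r (edges p) lam) :
    ∃ s, Interleaves (p 0) (p 1) (BlockLT (fun i => blockIndex lam i) s) := by
  obtain ⟨-, bs, hlen, hword : patternWord r (edges p) = blockWord lam bs⟩ := h
  refine ⟨(bs.getD · true), fun i j => ?_⟩
  have hblock := lt_iff_blockLT hlen (x := p 0 i - 1) (y := p 1 j - 1)
    (hword ▸ hp.patternWord_getElem? 0 i) (hword ▸ hp.patternWord_getElem? 1 j)
  have hi : (_ : List Bool).count true = i := hp.count_take_patternWord 0 i
  have hj : (_ : List Bool).count false = j := hp.count_take_patternWord 1 j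
  rw [← hword, hi, hj] at hblock
  rw [← Nat.sub_lt_sub_iff_right (hp.one_le_apply 0 i), hblock]
  rfl

end Composition

section Arrangement

variable {r k : ℕ} {L : Fin r → ℕ} {s t : ℕ → Bool} {σ : Equiv.Perm (Fin k)}

/-- The place of edge `a` inside a block in which the orientations of the two patterns are `s` and
`t`, when `σ` is to determine which of the two patterns each pair of edges forms. -/
def blockPos (s t : Bool) (σ : Equiv.Perm (Fin k)) (a : Fin k) : ℤ :=
  match s, t with
  | true, true => a
  | true, false => σ a
  | false, true => -σ a
  | false, false => -a

lemma blockPos_injective (s t : Bool) (σ : Equiv.Perm (Fin k)) :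
    Function.Injective (blockPos s t σ) := by
  intro a b h
  cases s <;> cases t <;> simpa [blockPos, Fin.val_inj] using h

lemma blockPos_lt_iff {s t : Bool} {a b : Fin k} (hab : a < b) :
    blockPos s t σ a < blockPos s t σ b ↔ (if σ a < σ b then s else t) = true := by
  have hσ : σ a ≠ σ b := σ.injective.ne hab.ne
  cases s <;> cases t <;> simp [blockPos, hab, hab.le, hσ.symm.le_iff_lt]

/-- The key by which vertex `i` of edge `a` is sorted in the clique associated with `σ`: by block,
then by the place of the edge in the block, then by `i`. -/
def vertexKey (L : Fin r → ℕ) (s t : ℕ → Bool) (σ : Equiv.Perm (Fin k)) (x : Fin k × Fin r) :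
    ℕ ×ₗ ℤ ×ₗ Fin r :=
  toLex (L x.2, toLex (blockPos (s (L x.2)) (t (L x.2)) σ x.1, x.2))

lemma vertexKey_lt_iff {a b : Fin k} {i j : Fin r} :
    vertexKey L s t σ (a, i) < vertexKey L s t σ (b, j) ↔ L i < L j ∨ L i = L j ∧
      (blockPos (s (L i)) (t (L i)) σ a < blockPos (s (L i)) (t (L i)) σ b ∨ a = b ∧ i < j) := by
  simp only [vertexKey, Prod.Lex.toLex_lt_toLex]
  refine or_congr_right (and_congr_right fun hL => ?_)
  rw [← hL, (blockPos_injective _ _ σ).eq_iff]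

lemma vertexKey_injective (L : Fin r → ℕ) (s t : ℕ → Bool) (σ : Equiv.Perm (Fin k)) :
    Function.Injective (vertexKey L s t σ) := by
  rintro ⟨a, i⟩ ⟨b, j⟩ h
  simp only [vertexKey, toLex_inj, Prod.mk.injEq] at h
  obtain ⟨-, hpos, rfl⟩ := h
  rw [blockPos_injective _ _ σ hpos]

/-- The sorted listing of the edges of the clique associated with the permutation `σ`. -/
def arrangement (L : Fin r → ℕ) (s t : ℕ → Bool) (σ : Equiv.Perm (Fin k)) (a : Fin k) (i : Fin r) :
    ℕ :=
  rank (vertexKey L s t σ) (a, i)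

lemma interleaves_arrangement {a b : Fin k} (hab : a < b) :
    Interleaves (arrangement L s t σ a) (arrangement L s t σ b)
      (BlockLT L (if σ a < σ b then s else t)) := by
  intro i j
  rw [arrangement, arrangement, rank_lt_rank_iff, vertexKey_lt_iff, blockPos_lt_iff hab, BlockLT]
  split_ifs <;> simp [hab.ne]

lemma strictMono_arrangement (hL : Monotone L) (a : Fin k) :
    StrictMono (arrangement L s t σ a) := by
  intro i j hij
  rw [arrangement, arrangement, rank_lt_rank_iff, vertexKey_lt_iff]
  exact (hL hij.le).lt_or_eq.imp_right fun h => ⟨h, .inr ⟨rfl, hij⟩⟩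

lemma arrangement_lt_iff {i : Fin r} (hs : s (L i) = true) (ht : t (L i) = false) {a b : Fin k} :
    arrangement L s t σ a i < arrangement L s t σ b i ↔ σ a < σ b := by
  simp [arrangement, rank_lt_rank_iff, vertexKey_lt_iff, blockPos, hs, ht]

variable [NeZero r]

lemma isEnumeration_arrangement (hL : Monotone L) (hs : s (L 0) = true) (ht : t (L 0) = true) :
    IsEnumeration (arrangement L s t σ) where
  strictMono_min a b hab := (interleaves_arrangement hab 0 0).2 <| .inr ⟨rfl, by
    split_ifs <;> assumption⟩
  strictMono := strictMono_arrangement hL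
  injective := rank_injective (vertexKey_injective L s t σ)
  image_eq := (image_rank (vertexKey_injective L s t σ)).trans (by simp [mul_comm])

lemma IsEnumeration.exists_arrangement_eq {y : Fin k → Fin r → ℕ} (hy : IsEnumeration y)
    (hL : Monotone L) (hs : s (L 0) = true) (ht : t (L 0) = true) {i : Fin r}
    (hsi : s (L i) = true) (hti : t (L i) = false)
    (h : ∀ a b, a < b → Interleaves (y a) (y b) (BlockLT L s) ∨
      Interleaves (y a) (y b) (BlockLT L t)) :
    ∃ σ, arrangement L s t σ = y := by
  have hcolumn : Function.Injective fun a => y a i := fun a b hab =>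
    by_contra fun hne => hy.ne hne i i hab
  obtain ⟨σ, hσ⟩ := exists_perm_lt_iff hcolumn
  refine ⟨σ, (isEnumeration_arrangement hL hs ht).eq_of_interleaves hy fun a b hab j l => ?_⟩
  rw [interleaves_arrangement hab j l]
  rcases h a b hab with hrows | hrows
  · have hlt : σ a < σ b := (hσ a b).2 <| (hrows i i).2 <| .inr ⟨rfl, hsi⟩
    rw [if_pos hlt]
    exact (hrows j l).symm
  · have hnlt : ¬ σ a < σ b := by simp [hσ, hrows i i, BlockLT, hti]
    rw [if_neg hnlt]
    exact (hrows j l).symm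

lemma edges_arrangement_injective (hL : Monotone L) (hs : s (L 0) = true) (ht : t (L 0) = true)
    {i : Fin r} (hsi : s (L i) = true) (hti : t (L i) = false) :
    Function.Injective fun σ : Equiv.Perm (Fin k) => edges (arrangement L s t σ) := by
  intro σ τ h
  have harr := (isEnumeration_arrangement hL hs ht).eq_of_edges_eq
    (isEnumeration_arrangement hL hs ht).toIsSorted h
  exact perm_eq_of_lt_iff fun a b => by
    rw [← arrangement_lt_iff hsi hti, harr, arrangement_lt_iff hsi hti]

end Arrangement

section Counting

variable {r k : ℕ}

lemma mem_powerset_of_isOrderedMatching {M : Finset (Finset ℕ)} (hM : IsOrderedMatching r k M) :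
    M ∈ (Icc 1 (r * k)).powerset.powerset :=
  mem_powerset.2 fun _ he => mem_powerset.2 <| hM.2.2.2 ▸ subset_biUnion_of_mem id he

variable [NeZero r] {p q : Fin 2 → Fin r → ℕ} {L : Fin r → ℕ} {s t : ℕ → Bool}

lemma IsEnumeration.sign_zero_of_interleaves (hp : IsEnumeration p)
    (hps : Interleaves (p 0) (p 1) (BlockLT L s)) : s (L 0) = true := by
  simpa [BlockLT] using (hps 0 0).1 (hp.strictMono_min Fin.zero_lt_one)

lemma IsEnumeration.exists_sign_ne (hp : IsEnumeration p) (hq : IsEnumeration q)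
    (hps : Interleaves (p 0) (p 1) (BlockLT L s)) (hqt : Interleaves (q 0) (q 1) (BlockLT L t))
    (hpq : p ≠ q) : ∃ i, s (L i) ≠ t (L i) := by
  by_contra! hst
  refine hpq <| hp.eq_of_interleaves hq <| forall_fin_two_of_lt_iff.2 fun i j => ?_
  simpa only [hps i j, BlockLT, hst] using (hqt i j).symm

lemma isClique_iff_exists_arrangement (hp : IsEnumeration p) (hq : IsEnumeration q)
    (hL : Monotone L) (hps : Interleaves (p 0) (p 1) (BlockLT L s))
    (hqt : Interleaves (q 0) (q 1) (BlockLT L t)) {i : Fin r} (hsi : s (L i) = true)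
    (hti : t (L i) = false) {M : Finset (Finset ℕ)} :
    IsOrderedMatching r k M ∧ IsClique r {edges p, edges q} M ↔
      ∃ σ : Equiv.Perm (Fin k), edges (arrangement L s t σ) = M := by
  have hs := hp.sign_zero_of_interleaves hps
  have ht := hq.sign_zero_of_interleaves hqt
  constructor
  · rintro ⟨hM, hclique⟩
    obtain ⟨y, hy, rfl⟩ := exists_isEnumeration_edges_eq hM
    rw [hy.isClique_edges_iff hp hq hps hqt] at hclique
    obtain ⟨σ, rfl⟩ := hy.exists_arrangement_eq hL hs ht hsi hti hclique
    exact ⟨σ, rfl⟩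
  · rintro ⟨σ, rfl⟩
    have henum := isEnumeration_arrangement (σ := σ) hL hs ht
    refine ⟨henum.isOrderedMatching_edges,
      (henum.isClique_edges_iff hp hq hps hqt).2 fun a b hab => ?_⟩
    have hrows := interleaves_arrangement (L := L) (s := s) (t := t) (σ := σ) hab
    split_ifs at hrows
    exacts [.inl hrows, .inr hrows]

lemma cliqueCount_eq_factorial (hp : IsEnumeration p) (hq : IsEnumeration q) (hL : Monotone L)
    (hps : Interleaves (p 0) (p 1) (BlockLT L s)) (hqt : Interleaves (q 0) (q 1) (BlockLT L t))
    {i : Fin r} (hsi : s (L i) = true) (hti : t (L i) = false) (k : ℕ) :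
    cliqueCount r {edges p, edges q} k = k.factorial := by
  have hinj := edges_arrangement_injective (k := k) hL (hp.sign_zero_of_interleaves hps)
    (hq.sign_zero_of_interleaves hqt) hsi hti
  have hcliques : {M ∈ (Icc 1 (r * k)).powerset.powerset |
      IsOrderedMatching r k M ∧ IsClique r {edges p, edges q} M} =
      univ.image fun σ : Equiv.Perm (Fin k) => edges (arrangement L s t σ) := by
    ext M
    rw [mem_filter, and_iff_right_of_imp fun hM => mem_powerset_of_isOrderedMatching hM.1,
      isClique_iff_exists_arrangement hp hq hL hps hqt hsi hti]
    simp
  rw [cliqueCount, hcliques, card_image_of_injective _ hinj, card_univ, Fintype.card_perm,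
    Fintype.card_fin]

end Counting

end OrderedMatching

/-- **Lemma.** For a harmonious pair `{P, Q}` of distinct `r`-patterns, the number of
`{P,Q}`-cliques of size `k` partitioning `[rk]` equals `k!`. -/
theorem harmonious_clique_count (r : ℕ) (hr : 2 ≤ r) (P Q : Finset (Finset ℕ))
    (hP : IsOrderedMatching r 2 P) (hQ : IsOrderedMatching r 2 Q)
    (hPQ : Harmonious r P Q) (k : ℕ) (hk : 1 ≤ k) :
    cliqueCount r {P, Q} k = k.factorial := by
  have : NeZero r := ⟨by omega⟩
  obtain ⟨p, hp, rfl⟩ := OrderedMatching.exists_isEnumeration_edges_eq hP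
  obtain ⟨q, hq, rfl⟩ := OrderedMatching.exists_isEnumeration_edges_eq hQ
  obtain ⟨hne, -, -, lam, hcp, hcq⟩ := hPQ
  obtain ⟨s, hs⟩ := hp.exists_interleaves_blockLT hcp
  obtain ⟨t, ht⟩ := hq.exists_interleaves_blockLT hcq
  have hL : Monotone fun i : Fin r => OrderedMatching.blockIndex lam i :=
    (OrderedMatching.blockIndex_mono lam).comp Fin.val_strictMono.monotone
  obtain ⟨i, hi⟩ := hp.exists_sign_ne hq hs ht (ne_of_apply_ne OrderedMatching.edges hne)
  have hts : t (OrderedMatching.blockIndex lam i) = !s (OrderedMatching.blockIndex lam i) :=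
    Bool.eq_not.2 hi.symm
  rcases hsi : s (OrderedMatching.blockIndex lam i) <;> rw [hsi] at hts
  · rw [Set.pair_comm]
    exact OrderedMatching.cliqueCount_eq_factorial hq hp hL ht hs hts hsi k
  · exact OrderedMatching.cliqueCount_eq_factorial hp hq hL hs ht hsi hts k
end
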